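/- arXiv:2109.00623 — 2 statements merged into one kernel-verified Lean document; each statement's English description precedes it below -/
import Mathlib

section
/- Let β > 0, let t* ∈ (0, 2β), let a ∈ ℂ with a ≠ 0, and set w = exp(−π i t*/β). Define m_k = a·w^k for k = 0,1,2, and Γ_0 = m_0 − m_1, Γ_1 = m_1 − m_2. Then Γ_1 ≠ 0 and Γ_0 ≠ Γ_1, and the Prony formulas recover the burst exactly: Γ_0²/(Γ_0 − Γ_1) = a and Γ_0/Γ_1 = exp(π i t*/β); moreover, if t* ∈ (0, β], then (β/π)·arg(Γ_0/Γ_1) = t*, where arg takes values in (−π, π]. -/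
/-!
The differences `Γ k = m k - m (k + 1)` of a geometric sequence `m k = a * w ^ k` are again
geometric with ratio `w`, which gives `w⁻¹` as a quotient, and `Γ 0 - Γ 1 = Γ 0 * (1 - w)` with
`Γ 0 = a * (1 - w)`, which gives `a`. For a burst at time `t` these formulas degenerate only at
`w = 1`, that is, when the phase `π t / β` is a multiple of `2π`; and `t` itself can be read off
the quotient while the phase stays in the range `(-π, π]` of `arg`.
-/

/-- The differences `Γ k = m k - m (k + 1)` of consecutive measurements, from which the Prony
formulas recover a burst. The sign is opposite to that of `fwdDiff`. -/
def pronyDiff {R : Type*} [Sub R] (m : ℕ → R) (k : ℕ) : R :=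
  m k - m (k + 1)

section Ring

variable {R : Type*} [Ring R]

theorem pronyDiff_geom (a w : R) (k : ℕ) :
    pronyDiff (fun j ↦ a * w ^ j) k = a * w ^ k * (1 - w) := by
  rw [pronyDiff, pow_succ, ← mul_assoc, mul_one_sub]

theorem pronyDiff_geom_succ (a w : R) (k : ℕ) :
    pronyDiff (fun j ↦ a * w ^ j) (k + 1) = pronyDiff (fun j ↦ a * w ^ j) k * w := by
  simp only [pronyDiff, pow_succ, sub_mul, mul_assoc]

theorem pronyDiff_geom_sub_succ (a w : R) (k : ℕ) :
    pronyDiff (fun j ↦ a * w ^ j) k - pronyDiff (fun j ↦ a * w ^ j) (k + 1) =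
      pronyDiff (fun j ↦ a * w ^ j) k * (1 - w) := by
  rw [pronyDiff_geom_succ, mul_one_sub]

variable [NoZeroDivisors R] {a w : R}

theorem pronyDiff_geom_ne_zero (ha : a ≠ 0) (hw₀ : w ≠ 0) (hw₁ : w ≠ 1) (k : ℕ) :
    pronyDiff (fun j ↦ a * w ^ j) k ≠ 0 := by
  rw [pronyDiff_geom]
  exact mul_ne_zero (mul_ne_zero ha (pow_ne_zero k hw₀)) (sub_ne_zero.mpr hw₁.symm)

theorem pronyDiff_geom_ne_succ (ha : a ≠ 0) (hw₀ : w ≠ 0) (hw₁ : w ≠ 1) (k : ℕ) :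
    pronyDiff (fun j ↦ a * w ^ j) k ≠ pronyDiff (fun j ↦ a * w ^ j) (k + 1) := by
  rw [← sub_ne_zero, pronyDiff_geom_sub_succ]
  exact mul_ne_zero (pronyDiff_geom_ne_zero ha hw₀ hw₁ k) (sub_ne_zero.mpr hw₁.symm)

end Ring

section Field

variable {K : Type*} [Field K] {a w : K}

theorem pronyDiff_geom_div_succ (ha : a ≠ 0) (hw₀ : w ≠ 0) (hw₁ : w ≠ 1) (k : ℕ) :
    pronyDiff (fun j ↦ a * w ^ j) k / pronyDiff (fun j ↦ a * w ^ j) (k + 1) = w⁻¹ := by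
  rw [pronyDiff_geom_succ, div_mul_cancel_left₀ (pronyDiff_geom_ne_zero ha hw₀ hw₁ k)]

theorem pronyDiff_geom_sq_div_sub_succ (ha : a ≠ 0) (hw₀ : w ≠ 0) (hw₁ : w ≠ 1) (k : ℕ) :
    pronyDiff (fun j ↦ a * w ^ j) k ^ 2 /
      (pronyDiff (fun j ↦ a * w ^ j) k - pronyDiff (fun j ↦ a * w ^ j) (k + 1)) = a * w ^ k := by
  rw [pronyDiff_geom_sub_succ, sq, mul_div_mul_left _ _ (pronyDiff_geom_ne_zero ha hw₀ hw₁ k),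
    pronyDiff_geom, mul_div_cancel_right₀ _ (sub_ne_zero.mpr hw₁.symm)]

end Field

section Phase

variable {β t : ℝ}

theorem exp_pi_mul_div_mul_I_eq_one_iff (hβ : β ≠ 0) :
    Complex.exp ((Real.pi * t / β) * Complex.I) = 1 ↔ ∃ n : ℤ, t = n * (2 * β) := by
  have phase_eq_iff (n : ℤ) : Real.pi * t / β = n * (2 * Real.pi) ↔ t = n * (2 * β) := by
    rw [div_eq_iff hβ, ← mul_right_inj' Real.pi_ne_zero (b := t)]
    ring_nf
  rw [Complex.exp_eq_one_iff]
  refine exists_congr fun n ↦ ?_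
  rw [← mul_assoc, mul_left_inj' Complex.I_ne_zero, ← phase_eq_iff]
  norm_cast

theorem div_pi_mul_arg_exp_pi_mul_div_mul_I (hβ : β ≠ 0) (ht : t / β ∈ Set.Ioc (-1) 1) :
    β / Real.pi * Complex.arg (Complex.exp ((Real.pi * t / β) * Complex.I)) = t := by
  have arg_eq : Complex.arg (Complex.exp ((Real.pi * t / β) * Complex.I)) = Real.pi * (t / β) := by
    have h := Circle.arg_exp (x := Real.pi * (t / β)) (by nlinarith [Real.pi_pos, ht.1])
      (mul_le_of_le_one_right Real.pi_pos.le ht.2)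
    rw [← h, Circle.coe_exp]
    push_cast
    rw [mul_div_assoc]
  rw [arg_eq, ← mul_assoc, div_mul_cancel₀ β Real.pi_ne_zero, mul_div_cancel₀ t hβ]

end Phase

theorem ne_int_mul_of_pos_of_lt {R : Type*} [Ring R] [LinearOrder R] [IsStrictOrderedRing R]
    {x p : R} (hx : 0 < x) (hxp : x < p) (n : ℤ) : x ≠ n * p := by
  rintro rfl
  have hp : 0 < p := hx.trans hxp
  have n_pos : 0 < n := Int.cast_pos.mp (pos_of_mul_pos_left hx hp.le)
  have n_lt_one : n < 1 := by
    exact_mod_cast (mul_lt_iff_lt_one_left hp).mp hxp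
  lia

theorem stmt_6_general
    (β tstar : ℝ) (hβ : β ≠ 0) (ht : ∀ n : ℤ, tstar ≠ n * (2 * β))
    (a : ℂ) (ha : a ≠ 0)
    (w : ℂ) (hw : w = Complex.exp (-(Real.pi * tstar / β) * Complex.I))
    (m : ℕ → ℂ) (hm : ∀ k, m k = a * w ^ k)
    (Γ₀ Γ₁ : ℂ) (hΓ₀ : Γ₀ = m 0 - m 1) (hΓ₁ : Γ₁ = m 1 - m 2) :
    Γ₁ ≠ 0 ∧ Γ₀ ≠ Γ₁ ∧
    Γ₀ ^ 2 / (Γ₀ - Γ₁) = a ∧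
    Γ₀ / Γ₁ = Complex.exp ((Real.pi * tstar / β) * Complex.I) ∧
    (tstar / β ∈ Set.Ioc (-1) 1 → β / Real.pi * Complex.arg (Γ₀ / Γ₁) = tstar) := by
  obtain rfl : m = fun k ↦ a * w ^ k := funext hm
  replace hΓ₀ : Γ₀ = pronyDiff (fun k ↦ a * w ^ k) 0 := hΓ₀
  replace hΓ₁ : Γ₁ = pronyDiff (fun k ↦ a * w ^ k) 1 := hΓ₁
  have w_inv : w⁻¹ = Complex.exp ((Real.pi * tstar / β) * Complex.I) := by
    rw [hw, ← Complex.exp_neg, neg_mul, neg_neg]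
  have w_ne_zero : w ≠ 0 := hw ▸ Complex.exp_ne_zero _
  have w_ne_one : w ≠ 1 := by
    rw [← inv_ne_one, w_inv, Ne, exp_pi_mul_div_mul_I_eq_one_iff hβ]
    exact not_exists.mpr ht
  have ratio : Γ₀ / Γ₁ = Complex.exp ((Real.pi * tstar / β) * Complex.I) := by
    rw [hΓ₀, hΓ₁, ← w_inv, pronyDiff_geom_div_succ ha w_ne_zero w_ne_one 0]
  refine ⟨?_, ?_, ?_, ratio, fun ht_div ↦ ?_⟩
  · exact hΓ₁ ▸ pronyDiff_geom_ne_zero ha w_ne_zero w_ne_one 1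
  · exact hΓ₀ ▸ hΓ₁ ▸ pronyDiff_geom_ne_succ ha w_ne_zero w_ne_one 0
  · rw [hΓ₀, hΓ₁, pronyDiff_geom_sq_div_sub_succ ha w_ne_zero w_ne_one 0, pow_zero, mul_one]
  · rw [ratio, div_pi_mul_arg_exp_pi_mul_div_mul_I hβ ht_div]

theorem stmt_6
    (β tstar : ℝ) (hβ : 0 < β) (ht0 : 0 < tstar) (ht2 : tstar < 2 * β)
    (a : ℂ) (ha : a ≠ 0)
    (w : ℂ) (hw : w = Complex.exp (-(Real.pi * tstar / β) * Complex.I))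
    (m : ℕ → ℂ) (hm : ∀ k, m k = a * w ^ k)
    (Γ₀ Γ₁ : ℂ) (hΓ₀ : Γ₀ = m 0 - m 1) (hΓ₁ : Γ₁ = m 1 - m 2) :
    Γ₁ ≠ 0 ∧ Γ₀ ≠ Γ₁ ∧
    Γ₀ ^ 2 / (Γ₀ - Γ₁) = a ∧
    Γ₀ / Γ₁ = Complex.exp ((Real.pi * tstar / β) * Complex.I) ∧
    (tstar ≤ β → β / Real.pi * Complex.arg (Γ₀ / Γ₁) = tstar) := by
  obtain ⟨hΓ₁_ne, hΓ_ne, h_amp, h_ratio, h_arg⟩ := stmt_6_general β tstar hβ.ne'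
    (ne_int_mul_of_pos_of_lt ht0 ht2) a ha w hw m hm Γ₀ Γ₁ hΓ₀ hΓ₁
  exact ⟨hΓ₁_ne, hΓ_ne, h_amp, h_ratio, fun hle ↦
    h_arg ⟨by linarith [div_pos ht0 hβ], (div_le_one hβ).mpr hle⟩⟩
end

section
/- Let f_1 = 1_{[0,1]} − (1/2)·1_{[2,3]}, f̃_1 = 1_{[2,3]}, and g = 1_{[1,2]} + 2·1_{[3,4]} as real functions on ℝ, where 1_S denotes the indicator function of the set S. Then for every t ≥ 0, ∫_ℝ f_1(x − t)·g(x) dx = ∫_ℝ (if t ≥ 2 then f̃_1(x − (t − 2)) else 0)·g(x) dx, and both integrals equal the piecewise function that is 0 for t ≤ 2, equals 2t − 4 for 2 ≤ t ≤ 3, equals 8 − 2t for 3 ≤ t ≤ 4, and is 0 for t ≥ 4. -/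
open MeasureTheory

/-!
A travelling box meets a box of the same width `w` in a tent `Λ` of height and half-width `w`. If
the burst is a box followed, at distance `d`, by `γ` times the same box, and the detector has the
same form with `c` in place of `γ`, the signal is therefore the sum of a middle tent of height
`(1 + γ * c) * w`, an early tent weighted by `γ` and a late tent weighted by `c`. Here
`γ = -1 / 2` and `c = 2`, so the middle tent cancels, and the early one is over by time `0`: what
remains is `2 * Λ (t - 3)`. The single box `[2, 3]`, emitted at time `2`, is measured as
`Λ (t - 1) + 2 * Λ (t - 3)`, and emission falls exactly between these two tents.
-/

section TranslationPairing

variable {G : Type*} [AddGroup G] [MeasurableSpace G]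

/-- The measurement by `g` of the translate of `f` by `t`, that is `⟨T(t) f, g⟩` for the translation
semigroup `T` when `G = ℝ` and `f`, `g` are square integrable. -/
noncomputable def translationPairing (μ : Measure G) (f g : G → ℝ) (t : G) : ℝ :=
  ∫ x, f (x - t) * g x ∂μ

lemma translationPairing_smul_left (μ : Measure G) (c : ℝ) (f g : G → ℝ) (t : G) :
    translationPairing μ (c • f) g t = c * translationPairing μ f g t := by
  simp only [translationPairing, Pi.smul_apply, smul_eq_mul, mul_assoc, integral_const_mul]

lemma translationPairing_smul_right (μ : Measure G) (c : ℝ) (f g : G → ℝ) (t : G) :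
    translationPairing μ f (c • g) t = c * translationPairing μ f g t := by
  simp only [translationPairing, Pi.smul_apply, smul_eq_mul, mul_left_comm _ c, integral_const_mul]

variable [MeasurableAdd G] {μ : Measure G} [μ.IsAddRightInvariant]
  {p q : ENNReal} [p.HolderConjugate q] {f f' g g' : G → ℝ}

lemma integrable_comp_sub_right_mul (hf : MemLp f p μ) (hg : MemLp g q μ) (t : G) :
    Integrable (fun x => f (x - t) * g x) μ :=
  (hf.comp_measurePreserving (measurePreserving_sub_right μ t)).integrable_mul hg

lemma translationPairing_add_left (hf : MemLp f p μ) (hf' : MemLp f' p μ) (hg : MemLp g q μ)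
    (t : G) :
    translationPairing μ (f + f') g t =
      translationPairing μ f g t + translationPairing μ f' g t := by
  simp only [translationPairing, Pi.add_apply, add_mul]
  exact integral_add (integrable_comp_sub_right_mul hf hg t)
    (integrable_comp_sub_right_mul hf' hg t)

lemma translationPairing_add_right (hf : MemLp f p μ) (hg : MemLp g q μ) (hg' : MemLp g' q μ)
    (t : G) :
    translationPairing μ f (g + g') t =
      translationPairing μ f g t + translationPairing μ f g' t := by
  simp only [translationPairing, Pi.add_apply, mul_add]
  exact integral_add (integrable_comp_sub_right_mul hf hg t)
    (integrable_comp_sub_right_mul hf hg' t)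

end TranslationPairing

/-- The box function of the interval `[a, b]`, the shape of a single burst; it is zero if
`b < a`. -/
noncomputable def box (a b : ℝ) : ℝ → ℝ :=
  (Set.Icc a b).indicator fun _ => 1

lemma memLp_box (p : ENNReal) (a b : ℝ) : MemLp (box a b) p :=
  memLp_indicator_const p measurableSet_Icc 1 (.inr measure_Icc_lt_top.ne)

lemma box_comp_sub (a b t : ℝ) : (fun x => box a b (x - t)) = box (a + t) (b + t) := by
  simp only [box, ← Set.preimage_sub_const_Icc]
  rfl

lemma box_mul_box (a b c d : ℝ) : box a b * box c d = box (max a c) (min b d) := by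
  ext x
  rw [Pi.mul_apply, box, box, box, ← Set.inter_indicator_mul, Set.Icc_inter_Icc]
  simp only [mul_one]

lemma integral_box (a b : ℝ) : ∫ x, box a b x = max (b - a) 0 := by
  rw [box, integral_indicator_const _ measurableSet_Icc, Measure.real, Real.volume_Icc,
    ENNReal.toReal_ofReal', smul_eq_mul, mul_one]

lemma translationPairing_box_box (a b c d t : ℝ) :
    translationPairing volume (box a b) (box c d) t =
      max (min (b + t) d - max (a + t) c) 0 := by
  rw [← integral_box, ← box_mul_box, ← box_comp_sub]
  rfl

/-- The tent function of height and half-width `w` centred at `0`; it is zero if `w < 0`. -/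
def tent (w s : ℝ) : ℝ :=
  max (w - |s|) 0

lemma tent_eq_zero {w s : ℝ} (h : w ≤ |s|) : tent w s = 0 :=
  max_eq_right (sub_nonpos.mpr h)

lemma tent_eq_ite (w s : ℝ) :
    tent w s = if s ≤ -w then 0 else if s ≤ 0 then w + s else if s ≤ w then w - s else 0 := by
  grind [tent]

lemma translationPairing_box_box_of_same_width (a b w t : ℝ) :
    translationPairing volume (box a (a + w)) (box b (b + w)) t = tent w (t + a - b) := by
  rw [translationPairing_box_box]
  grind [tent]

/-- A box of width `w` starting at `a`, followed at distance `d` by `c` times the same box. Both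
the first burst and the detector are of this form. -/
noncomputable def boxPair (w d c a : ℝ) : ℝ → ℝ :=
  box a (a + w) + c • box (a + d) (a + d + w)

lemma memLp_boxPair (p : ENNReal) (w d c a : ℝ) : MemLp (boxPair w d c a) p :=
  (memLp_box p _ _).add ((memLp_box p _ _).const_smul c)

lemma translationPairing_box_boxPair (w d c a b t : ℝ) :
    translationPairing volume (box a (a + w)) (boxPair w d c b) t =
      tent w (t + a - b) + c * tent w (t + a - (b + d)) := by
  rw [boxPair, translationPairing_add_right (memLp_box 2 _ _) (memLp_box 2 _ _)
      ((memLp_box 2 _ _).const_smul c),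
    translationPairing_smul_right, translationPairing_box_box_of_same_width,
    translationPairing_box_box_of_same_width]

lemma translationPairing_boxPair_boxPair (w d γ c a b t : ℝ) :
    translationPairing volume (boxPair w d γ a) (boxPair w d c b) t =
      (1 + γ * c) * tent w (t + a - b) + γ * tent w (t + (a + d) - b)
        + c * tent w (t + a - (b + d)) := by
  have middle_tents_coincide : t + (a + d) - (b + d) = t + a - b := by ring
  rw [boxPair, translationPairing_add_left (memLp_box 2 _ _) ((memLp_box 2 _ _).const_smul γ)
      (memLp_boxPair 2 w d c b),
    translationPairing_smul_left, translationPairing_box_boxPair, translationPairing_box_boxPair,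
    middle_tents_coincide]
  ring

lemma translationPairing_boxPair_boxPair_of_mul_eq_neg_one {w d γ c a b t : ℝ}
    (hγc : γ * c = -1) (ht : w ≤ t + (a + d) - b) :
    translationPairing volume (boxPair w d γ a) (boxPair w d c b) t =
      c * tent w (t + a - (b + d)) := by
  rw [translationPairing_boxPair_boxPair, hγc, tent_eq_zero (ht.trans (le_abs_self _))]
  ring

lemma integral_delayed_box_mul_boxPair {w d a b : ℝ} (first_over : w ≤ a - b)
    (second_ahead : w ≤ b + d - a) (c τ t : ℝ) :
    ∫ x, (if τ ≤ t then box a (a + w) (x - (t - τ)) else 0) * boxPair w d c b x =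
      c * tent w (t - τ + a - (b + d)) := by
  by_cases emitted : τ ≤ t
  · have first_tent : tent w (t - τ + a - b) = 0 :=
      tent_eq_zero (by linarith [le_abs_self (t - τ + a - b)])
    simp only [if_pos emitted]
    refine (translationPairing_box_boxPair w d c a b (t - τ)).trans ?_
    rw [first_tent, zero_add]
  · have second_tent : tent w (t - τ + a - (b + d)) = 0 :=
      tent_eq_zero (by linarith [neg_le_abs (t - τ + a - (b + d))])
    simp only [if_neg emitted, zero_mul, integral_zero, second_tent, mul_zero]

theorem stmt_19
    (f₁ f₁' g : ℝ → ℝ)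
    (hf₁ : f₁ = fun x => Set.indicator (Set.Icc (0:ℝ) 1) (fun _ => (1:ℝ)) x
      - (1 / 2) * Set.indicator (Set.Icc (2:ℝ) 3) (fun _ => (1:ℝ)) x)
    (hf₁' : f₁' = fun x => Set.indicator (Set.Icc (2:ℝ) 3) (fun _ => (1:ℝ)) x)
    (hg : g = fun x => Set.indicator (Set.Icc (1:ℝ) 2) (fun _ => (1:ℝ)) x
      + 2 * Set.indicator (Set.Icc (3:ℝ) 4) (fun _ => (1:ℝ)) x) :
    ∀ t : ℝ, 0 ≤ t →
      (∫ x : ℝ, f₁ (x - t) * g x)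
        = (∫ x : ℝ, (if 2 ≤ t then f₁' (x - (t - 2)) else 0) * g x) ∧
      (∫ x : ℝ, f₁ (x - t) * g x)
        = (if t ≤ 2 then 0 else if t ≤ 3 then 2 * t - 4
            else if t ≤ 4 then 8 - 2 * t else 0) := by
  intro t ht
  have hf₁_pair : f₁ = boxPair 1 2 (-1 / 2) 0 := by
    ext x
    norm_num [hf₁, boxPair, box]
    ring
  have hf₁'_box : f₁' = box 2 (2 + 1) := by
    norm_num [hf₁', box]
  have hg_pair : g = boxPair 1 2 2 1 := by
    ext x
    norm_num [hg, boxPair, box]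
  have signal : ∫ x, f₁ (x - t) * g x = 2 * tent 1 (t - 3) := by
    rw [hf₁_pair, hg_pair]
    refine (translationPairing_boxPair_boxPair_of_mul_eq_neg_one
      (by norm_num) (by linarith)).trans ?_
    ring_nf
  have delayed_signal :
      ∫ x, (if 2 ≤ t then f₁' (x - (t - 2)) else 0) * g x = 2 * tent 1 (t - 3) := by
    rw [hf₁'_box, hg_pair, integral_delayed_box_mul_boxPair (by norm_num) (by norm_num)]
    ring_nf
  refine ⟨signal.trans delayed_signal.symm, ?_⟩
  rw [signal, tent_eq_ite]
  grind
end
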